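/- The quantities T_{1s}, s = 1, ..., p-1, are the unique solution of the linear system Σ_{s=1}^{p-1} (K(us) + p + 1)·t_s = K^{(m)}(u) + q + 1, u ranging over F_p^*. -/

import Mathlib

/-- The Kloosterman sum over the prime field `F_p`. -/
noncomputable def kloosterman (p : ℕ) [Fact p.Prime] (u : ZMod p) : ℂ :=
  ∑ x ∈ (Finset.univ \ {0} : Finset (ZMod p)),
    Complex.exp (2 * Real.pi * Complex.I * ((x + u * x⁻¹).val : ℂ) / p)

/-- The Kloosterman sum over the extension field `F = F_q`, `q = p^m`, at `u ∈ F_p`. -/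
noncomputable def kloostermanExt (p : ℕ) [Fact p.Prime] (F : Type*) [Field F] [Fintype F]
    [DecidableEq F] [Algebra (ZMod p) F] (u : ZMod p) : ℂ :=
  ∑ x ∈ (Finset.univ \ {0} : Finset F),
    Complex.exp (2 * Real.pi * Complex.I *
      ((Algebra.trace (ZMod p) F (x + algebraMap (ZMod p) F u * x⁻¹)).val : ℂ) / p)

/-!
Write `N i j` for the number of `x ∈ Fˣ` with `tr x = i` and `tr x⁻¹ = j`. Since
`N (c * i) (c⁻¹ * j) = N i j`, all the counts are determined by `N 0 0` and the `N 1 s`. Grouping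
the sum over `Fˣ` by the values of `tr x` and `tr x⁻¹` therefore expresses the Kloosterman sum over
`F` through Kloosterman sums over `k`, and the fibres of the trace, all of cardinality `#F / #k`,
supply the relations between the counts that turn this expression into the linear system.

For uniqueness, the coefficient matrix factors as `A * (1 + (#k + 1) • J) * A'`, where
`A u y = ψ (u * y)`, `A'` is `A` with its rows permuted by inversion and `J` is the all-ones matrix;
this is because `K (u * s) = ∑ y, A u y * A' y s`, while `A` and `A'` send constant vectors to
their negatives. The character matrix `A` is invertible by orthogonality of characters, and the
middle factor has determinant `1 + (#k + 1) * (#k - 1) = #k ^ 2`.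
-/

open Finset Matrix

section UnitsSum

variable {K : Type*} [GroupWithZero K] [Fintype K] [DecidableEq K] {M : Type*} [AddCommMonoid M]

theorem sum_subtype_ne_zero_eq_sum_units (f : K → M) :
    ∑ x : {x : K // x ≠ 0}, f x = ∑ x : Kˣ, f x :=
  (unitsEquivNeZero.sum_comp fun x : {x : K // x ≠ 0} ↦ f x).symm

theorem sum_univ_sdiff_zero_eq_sum_units (f : K → M) : ∑ x ∈ univ \ {0}, f x = ∑ x : Kˣ, f x := by
  rw [← sum_subtype_ne_zero_eq_sum_units, sum_subtype (p := (· ≠ 0)) _ (by simp)]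

theorem sum_eq_zero_add_sum_units (f : K → M) : ∑ x, f x = f 0 + ∑ x : Kˣ, f x := by
  rw [Fintype.sum_eq_add_sum_subtype_ne f 0, sum_subtype_ne_zero_eq_sum_units]

theorem cast_card_units_eq_sub_one (R : Type*) [AddGroupWithOne R] :
    (Fintype.card Kˣ : R) = Fintype.card K - 1 := by
  simp [Fintype.card_eq_card_units_add_one K]

end UnitsSum

section CharacterSums

variable {k R : Type*} [Field k] [Fintype k] [CommRing R] [IsDomain R] {ψ : AddChar k R}

theorem card_ne_zero_of_isPrimitive (hψ : ψ.IsPrimitive) : (Fintype.card k : R) ≠ 0 := by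
  intro hcard
  obtain ⟨p, -, n, hp, hpn⟩ := FiniteField.card' k
  have : Fact p.Prime := ⟨hp⟩
  have : CharP R p := (CharP.charP_iff_prime_eq_zero hp).2 <| by
    rw [hpn, Nat.cast_pow] at hcard
    exact eq_zero_of_pow_eq_zero hcard
  obtain ⟨a, ha⟩ := AddChar.ne_one_iff.1 (hψ one_ne_zero)
  rw [AddChar.mulShift_apply, one_mul] at ha
  have hpow : ψ a ^ Fintype.card k = 1 := by
    rw [← AddChar.map_nsmul_eq_pow, card_nsmul_eq_zero, AddChar.map_zero_eq_one]
  refine ha (sub_eq_zero.1 (eq_zero_of_pow_eq_zero (n := Fintype.card k) ?_))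
  rw [hpn, sub_pow_char_pow, ← hpn, hpow, one_pow, sub_self]

variable [DecidableEq k]

theorem sum_units_addChar_mul (hψ : ψ.IsPrimitive) (b : k) :
    ∑ x : kˣ, ψ (x * b) = (if b = 0 then (Fintype.card k : R) else 0) - 1 := by
  rw [eq_sub_iff_add_eq', ← AddChar.map_zero_eq_one ψ, ← zero_mul b,
    ← sum_eq_zero_add_sum_units fun x ↦ ψ (x * b), AddChar.sum_mulShift b hψ]
  simp

theorem sum_units_addChar_mul_unit (hψ : ψ.IsPrimitive) (b : kˣ) :
    ∑ x : kˣ, ψ (x * b) = -1 := by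
  simp [sum_units_addChar_mul hψ]

end CharacterSums

section Kloosterman

/-- The Kloosterman sum `∑_{x ≠ 0} ψ (x + u x⁻¹)` of an additive character `ψ` of a finite field,
with the summation variable encoded as a unit. -/
def kloostermanSum {K R : Type*} [Field K] [Fintype K] [DecidableEq K] [CommRing R]
    (ψ : AddChar K R) (u : K) : R :=
  ∑ x : Kˣ, ψ (x + u * (x : K)⁻¹)

variable {k R : Type*} [Field k] [Fintype k] [DecidableEq k] [CommRing R] {ψ : AddChar k R}

theorem kloostermanSum_mul_units (ψ : AddChar k R) (u s : kˣ) :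
    kloostermanSum ψ (u * s) = ∑ y : kˣ, ψ (u * y) * ψ ((y : k)⁻¹ * s) := by
  rw [kloostermanSum, ← Equiv.sum_comp (Equiv.mulLeft u)]
  refine sum_congr rfl fun y _ ↦ ?_
  rw [← AddChar.map_add_eq_mul, Equiv.coe_mulLeft, Units.val_mul]
  congr 2
  field_simp

theorem kloostermanSum_zero [IsDomain R] (hψ : ψ.IsPrimitive) : kloostermanSum ψ 0 = -1 := by
  simpa [kloostermanSum] using sum_units_addChar_mul_unit hψ 1

end Kloosterman

section CoefficientMatrix

theorem det_one_add_vecMulVec {n S : Type*} [Fintype n] [DecidableEq n] [CommRing S] (v w : n → S) :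
    (1 + vecMulVec v w).det = 1 + w ⬝ᵥ v := by
  rw [vecMulVec_eq Unit, det_one_add_replicateCol_mul_replicateRow]

variable {k R : Type*} [Field k] [CommRing R]

/-- The matrix `(ψ (u y))` of an additive character `ψ` of a field, with rows and columns indexed
by the nonzero elements. -/
def unitsCharMatrix (ψ : AddChar k R) : Matrix kˣ kˣ R :=
  .of fun u y ↦ ψ (u * y)

variable [Fintype k] [DecidableEq k]

/-- The coefficient matrix `(K(us) + #k + 1)` of the linear system, with rows and columns indexed
by the nonzero elements. -/
def kloostermanMatrix (ψ : AddChar k R) : Matrix kˣ kˣ R :=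
  .of fun u s ↦ kloostermanSum ψ (u * s) + Fintype.card k + 1

theorem det_one_add_card_add_one_smul_ones :
    (1 + ((Fintype.card k : R) + 1) • vecMulVec 1 1 : Matrix kˣ kˣ R).det =
      (Fintype.card k : R) ^ 2 := by
  rw [← smul_vecMulVec, det_one_add_vecMulVec, dotProduct_smul, one_dotProduct_one,
    cast_card_units_eq_sub_one, smul_eq_mul]
  ring

variable [IsDomain R] {ψ : AddChar k R}

theorem unitsCharMatrix_mulVec_one (hψ : ψ.IsPrimitive) : unitsCharMatrix ψ *ᵥ 1 = -1 := by
  ext u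
  simpa [unitsCharMatrix, mulVec, dotProduct, mul_comm] using sum_units_addChar_mul_unit hψ u

theorem one_vecMul_unitsCharMatrix_submatrix_inv (hψ : ψ.IsPrimitive) :
    1 ᵥ* (unitsCharMatrix ψ).submatrix (Equiv.inv kˣ) id = -1 := by
  ext s
  simpa [unitsCharMatrix, vecMul, dotProduct] using
    (Equiv.sum_comp (Equiv.inv kˣ) fun y : kˣ ↦ ψ (y * s)).trans (sum_units_addChar_mul_unit hψ s)

theorem unitsCharMatrix_mul_inv_sub_ones (hψ : ψ.IsPrimitive) :
    unitsCharMatrix ψ * (unitsCharMatrix ψ⁻¹ - vecMulVec 1 1) = (Fintype.card k : R) • 1 := by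
  have hinv : unitsCharMatrix ψ * unitsCharMatrix ψ⁻¹ =
      (Fintype.card k : R) • 1 - vecMulVec 1 1 := by
    ext u v
    have hprod (y : kˣ) : ψ (u * y) * ψ⁻¹ (y * v) = ψ (y * (u - v : k)) := by
      rw [AddChar.inv_apply, ← AddChar.map_add_eq_mul]
      ring_nf
    simp_rw [unitsCharMatrix, mul_apply, of_apply, hprod, sum_units_addChar_mul hψ]
    simp [sub_eq_zero, one_apply, Units.ext_iff]
  rw [mul_sub, hinv, mul_vecMulVec, unitsCharMatrix_mulVec_one hψ, neg_vecMulVec, sub_neg_eq_add,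
    sub_add_cancel]

theorem det_unitsCharMatrix_ne_zero (hψ : ψ.IsPrimitive) : (unitsCharMatrix ψ).det ≠ 0 := by
  refine left_ne_zero_of_mul (b := (unitsCharMatrix ψ⁻¹ - vecMulVec 1 1).det) ?_
  rw [← det_mul, unitsCharMatrix_mul_inv_sub_ones hψ, det_smul, det_one, mul_one]
  exact pow_ne_zero _ (card_ne_zero_of_isPrimitive hψ)

theorem kloostermanMatrix_eq_mul (hψ : ψ.IsPrimitive) :
    kloostermanMatrix ψ = unitsCharMatrix ψ *
      (1 + ((Fintype.card k : R) + 1) • vecMulVec 1 1) *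
        (unitsCharMatrix ψ).submatrix (Equiv.inv kˣ) id := by
  have hones : unitsCharMatrix ψ * vecMulVec 1 1 * (unitsCharMatrix ψ).submatrix (Equiv.inv kˣ) id =
      vecMulVec 1 1 := by
    rw [mul_vecMulVec, vecMulVec_mul, unitsCharMatrix_mulVec_one hψ,
      one_vecMul_unitsCharMatrix_submatrix_inv hψ, neg_vecMulVec, vecMulVec_neg, neg_neg]
  rw [mul_add, mul_one, add_mul, Matrix.mul_smul, Matrix.smul_mul, hones]
  ext u s
  simp [kloostermanMatrix, unitsCharMatrix, mul_apply, kloostermanSum_mul_units, add_assoc]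

theorem det_kloostermanMatrix_ne_zero (hψ : ψ.IsPrimitive) : (kloostermanMatrix ψ).det ≠ 0 := by
  have hdet := det_unitsCharMatrix_ne_zero hψ
  have hinv : ((unitsCharMatrix ψ).submatrix (Equiv.inv kˣ) id).det ≠ 0 := by
    rw [det_permute]
    exact mul_ne_zero ((Equiv.Perm.sign _).isUnit.map (Int.castRingHom R)).ne_zero hdet
  rw [kloostermanMatrix_eq_mul hψ, det_mul, det_mul, det_one_add_card_add_one_smul_ones]
  exact mul_ne_zero (mul_ne_zero hdet (pow_ne_zero 2 (card_ne_zero_of_isPrimitive hψ))) hinv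

end CoefficientMatrix

section TraceCounts

/-- The number `T_{ij}` of nonzero `x ∈ F` with `tr x = i` and `tr x⁻¹ = j`. -/
noncomputable def traceInvCount (k F : Type*) [Field k] [Field F] [Algebra k F] (i j : k) : ℕ :=
  Nat.card {x : F | x ≠ 0 ∧ Algebra.trace k F x = i ∧ Algebra.trace k F x⁻¹ = j}

variable {k F : Type*} [Field k] [Field F] [Algebra k F]

theorem traceInvCount_comm (i j : k) : traceInvCount k F i j = traceInvCount k F j i :=
  Nat.card_congr <| (Equiv.inv F).subtypeEquiv fun x ↦ by simp [and_comm]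

theorem traceInvCount_mul_inv_mul (c : kˣ) (i j : k) :
    traceInvCount k F (c * i) (c⁻¹ * j) = traceInvCount k F i j := by
  refine (Nat.card_congr <| (MulAction.toPerm c : Equiv.Perm F).subtypeEquiv fun x ↦ ?_).symm
  simp [Units.smul_def, smul_inv₀]

theorem traceInvCount_unit_left (c : kˣ) (j : k) :
    traceInvCount k F c j = traceInvCount k F 1 (c * j) := by
  simpa using traceInvCount_mul_inv_mul (F := F) c 1 (c * j)

theorem traceInvCount_zero_unit (c : kˣ) : traceInvCount k F 0 c = traceInvCount k F 1 0 := by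
  rw [traceInvCount_comm, traceInvCount_unit_left, mul_zero]

section Fintype

variable [Fintype F]

theorem card_mul_card_trace_eq [Fintype k] [DecidableEq k] (i : k) :
    Fintype.card k * #{x : F | Algebra.trace k F x = i} = Fintype.card F := by
  have hsurj := Algebra.trace_surjective k F
  have hfiber (j : k) : #{x : F | Algebra.trace k F x = j} = #{x : F | Algebra.trace k F x = i} :=
    AddMonoidHom.card_fiber_eq_of_mem_range (Algebra.trace k F) (hsurj j) (hsurj i)
  calc
    _ = ∑ j : k, #{x : F | Algebra.trace k F x = j} := by
      simp_rw [hfiber, sum_const, card_univ, smul_eq_mul]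
    _ = Fintype.card F := (card_eq_sum_card_fiberwise (by simp)).symm

theorem traceInvCount_eq_card_filter_units [DecidableEq k] [DecidableEq F] (i j : k) :
    traceInvCount k F i j =
      #{x : Fˣ | (Algebra.trace k F x, Algebra.trace k F (x : F)⁻¹) = (i, j)} := by
  have himage : {x : F | x ≠ 0 ∧ Algebra.trace k F x = i ∧ Algebra.trace k F x⁻¹ = j} =
      Units.val '' {x : Fˣ | (Algebra.trace k F x, Algebra.trace k F (x : F)⁻¹) = (i, j)} := by
    ext x
    constructor
    · rintro ⟨hx, hi, hj⟩
      exact ⟨Units.mk0 x hx, by simp [hi, hj]⟩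
    · rintro ⟨y, hy, rfl⟩
      simpa using hy
  rw [traceInvCount, himage, Nat.card_image_of_injective Units.val_injective,
    Nat.card_eq_card_toFinset, Set.toFinset_ofPred]

variable [Fintype k]

theorem sum_units_trace_trace_inv [DecidableEq F] {M : Type*} [AddCommMonoid M]
    (g : k → k → M) :
    ∑ x : Fˣ, g (Algebra.trace k F x) (Algebra.trace k F (x : F)⁻¹) =
      ∑ i, ∑ j, traceInvCount k F i j • g i j := by
  classical
  rw [← sum_fiberwise' (univ : Finset Fˣ)
    (fun x ↦ (Algebra.trace k F x, Algebra.trace k F (x : F)⁻¹)) (fun a ↦ g a.1 a.2),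
    Fintype.sum_prod_type]
  simp_rw [sum_const, traceInvCount_eq_card_filter_units]

theorem card_mul_sum_traceInvCount_add_ite [DecidableEq k] (i : k) :
    Fintype.card k * ((if i = 0 then 1 else 0) + ∑ j, traceInvCount k F i j) = Fintype.card F := by
  classical
  have hunits : ∑ x : Fˣ, (if Algebra.trace k F x = i then 1 else 0) =
      ∑ j, traceInvCount k F i j := by
    rw [sum_units_trace_trace_inv fun a _ : k ↦ if a = i then 1 else 0, sum_comm]
    simp
  rw [← card_mul_card_trace_eq (F := F) i, card_filter,
    sum_eq_zero_add_sum_units (K := F), map_zero, hunits]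
  simp_rw [@eq_comm _ i]

end Fintype

theorem sum_traceInvCount_zero_add_one [Fintype k] [Finite F] :
    ∑ j : k, traceInvCount k F 0 j + 1 = ∑ j : k, traceInvCount k F 1 j := by
  classical
  have := Fintype.ofFinite F
  have hmul := (card_mul_sum_traceInvCount_add_ite (F := F) (0 : k)).trans
    (card_mul_sum_traceInvCount_add_ite (1 : k)).symm
  simpa [add_comm] using Nat.eq_of_mul_eq_mul_left Fintype.card_pos hmul

end TraceCounts

section LinearSystem

variable {k R : Type*} [Field k] [CommRing R]

/-- The additive character `ψ ∘ tr` of an extension field `F` of `k`. -/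
noncomputable def traceAddChar (F : Type*) [Field F] [Algebra k F] (ψ : AddChar k R) :
    AddChar F R :=
  ψ.compAddMonoidHom (Algebra.trace k F).toAddMonoidHom

theorem traceAddChar_apply {F : Type*} [Field F] [Algebra k F] (ψ : AddChar k R) (x : F) :
    traceAddChar F ψ x = ψ (Algebra.trace k F x) :=
  rfl

variable [Fintype k] {F : Type*} [Field F] [Algebra k F]

theorem kloostermanSum_traceAddChar [Fintype F] [DecidableEq F] (ψ : AddChar k R) (u : k) :
    kloostermanSum (traceAddChar F ψ) (algebraMap k F u) =
      ∑ i, ∑ j, traceInvCount k F i j * ψ (i + u * j) := by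
  simp_rw [← nsmul_eq_mul, ← sum_units_trace_trace_inv (F := F) fun i j ↦ ψ (i + u * j)]
  simp [kloostermanSum, traceAddChar_apply, ← Algebra.smul_def]

variable [DecidableEq k]

theorem sum_kloostermanSum_mul_traceInvCount (ψ : AddChar k R) (u : k) :
    ∑ s, kloostermanSum ψ (u * s) * traceInvCount k F 1 s =
      ∑ i : kˣ, ∑ j, traceInvCount k F i j * ψ (i + u * j) := by
  simp_rw [kloostermanSum, sum_mul]
  rw [sum_comm]
  refine sum_congr rfl fun i _ ↦ ?_
  rw [← Equiv.sum_comp (Equiv.mulLeft₀ (i : k) i.ne_zero)]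
  refine sum_congr rfl fun j _ ↦ ?_
  rw [Equiv.mulLeft₀_apply, traceInvCount_unit_left, mul_comm]
  congr 3
  field_simp

variable [Fintype F] [DecidableEq F] [IsDomain R] {ψ : AddChar k R}

theorem kloostermanSum_traceAddChar_eq_add_sum (hψ : ψ.IsPrimitive) (u : kˣ) :
    kloostermanSum (traceAddChar F ψ) (algebraMap k F u) =
      traceInvCount k F 0 0 - 2 * traceInvCount k F 1 0 +
        ∑ s : kˣ, kloostermanSum ψ (u * s) * traceInvCount k F 1 s := by
  have hzero : ∑ j : k, (traceInvCount k F 0 j : R) * ψ (0 + u * j) =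
      traceInvCount k F 0 0 - traceInvCount k F 1 0 := by
    simp_rw [sum_eq_zero_add_sum_units (K := k), traceInvCount_zero_unit, ← mul_sum, zero_add,
      mul_comm (u : k), sum_units_addChar_mul_unit hψ]
    simp [sub_eq_add_neg]
  rw [kloostermanSum_traceAddChar, sum_eq_zero_add_sum_units, hzero,
    ← sum_kloostermanSum_mul_traceInvCount, sum_eq_zero_add_sum_units, mul_zero,
    kloostermanSum_zero hψ]
  ring

theorem kloostermanMatrix_mulVec_traceInvCount (hψ : ψ.IsPrimitive) (u : kˣ) :
    (kloostermanMatrix ψ *ᵥ fun s ↦ (traceInvCount k F 1 s : R)) u =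
      kloostermanSum (traceAddChar F ψ) (algebraMap k F u) + Fintype.card F + 1 := by
  have hrows := congrArg (Nat.cast (R := R)) (sum_traceInvCount_zero_add_one (k := k) (F := F))
  have hrow := congrArg (Nat.cast (R := R)) (card_mul_sum_traceInvCount_add_ite (F := F) (1 : k))
  push_cast at hrows hrow
  simp_rw [sum_eq_zero_add_sum_units (K := k), traceInvCount_zero_unit, sum_const, card_univ,
    nsmul_eq_mul, cast_card_units_eq_sub_one] at hrows hrow
  rw [if_neg one_ne_zero] at hrow
  simp_rw [kloostermanMatrix, mulVec, dotProduct, of_apply, add_mul, sum_add_distrib, ← mul_sum,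
    kloostermanSum_traceAddChar_eq_add_sum hψ]
  linear_combination hrow - hrows

theorem kloosterman_linear_system_unique_general (hψ : ψ.IsPrimitive) (t : {s : k // s ≠ 0} → R) :
    (∀ u : k, u ≠ 0 →
      ∑ s : {s : k // s ≠ 0}, (kloostermanSum ψ (u * s) + Fintype.card k + 1) * t s =
        kloostermanSum (traceAddChar F ψ) (algebraMap k F u) + Fintype.card F + 1) ↔
    ∀ s : {s : k // s ≠ 0}, t s = traceInvCount k F 1 s := by
  have hsystem (u : kˣ) :
      ∑ s : {s : k // s ≠ 0}, (kloostermanSum ψ (u * s) + Fintype.card k + 1) * t s =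
        (kloostermanMatrix ψ *ᵥ (t ∘ unitsEquivNeZero)) u :=
    (unitsEquivNeZero.sum_comp fun s : {s : k // s ≠ 0} ↦
      (kloostermanSum ψ (u * s) + Fintype.card k + 1) * t s).symm
  calc
    _ ↔ kloostermanMatrix ψ *ᵥ (t ∘ unitsEquivNeZero) =
        kloostermanMatrix ψ *ᵥ fun s ↦ (traceInvCount k F 1 s : R) := by
      simp_rw [funext_iff, kloostermanMatrix_mulVec_traceInvCount hψ, ← hsystem]
      exact ⟨fun h u ↦ h u u.ne_zero, fun h u hu ↦ h (Units.mk0 u hu)⟩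
    _ ↔ t ∘ unitsEquivNeZero = fun s : kˣ ↦ (traceInvCount k F 1 s : R) :=
      (mulVec_injective_of_det_ne_zero (det_kloostermanMatrix_ne_zero hψ)).eq_iff
    _ ↔ ∀ s, t s = traceInvCount k F 1 s := by
      rw [funext_iff, ← unitsEquivNeZero.forall_congr_right]
      rfl

end LinearSystem

section PrimeField

variable {p : ℕ} [Fact p.Prime]

theorem kloosterman_eq_kloostermanSum (u : ZMod p) :
    kloosterman p u = kloostermanSum (K := ZMod p) ZMod.stdAddChar u := by
  rw [kloosterman, kloostermanSum, sum_univ_sdiff_zero_eq_sum_units]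
  simp_rw [ZMod.stdAddChar_apply, ZMod.toCircle_apply]

theorem kloostermanExt_eq_kloostermanSum (F : Type*) [Field F] [Fintype F] [DecidableEq F]
    [Algebra (ZMod p) F] (u : ZMod p) :
    kloostermanExt p F u =
      kloostermanSum (traceAddChar (k := ZMod p) F ZMod.stdAddChar) (algebraMap (ZMod p) F u) := by
  rw [kloostermanExt, kloostermanSum, sum_univ_sdiff_zero_eq_sum_units]
  simp_rw [traceAddChar_apply, ZMod.stdAddChar_apply, ZMod.toCircle_apply]

end PrimeField

/-- The quantities `T_{1s}`, for `s` ranging over the nonzero elements of `F_p`, are the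
unique solution of the linear system `Σ_s (K(us) + p + 1) t_s = K^(m)(u) + q + 1`,
`u` ranging over the nonzero elements of `F_p`. -/
theorem kloosterman_linear_system_unique (p m : ℕ) [Fact p.Prime] (F : Type*) [Field F]
    [Fintype F] [DecidableEq F] [Algebra (ZMod p) F] (hq : Fintype.card F = p ^ m) :
    (∀ u : ZMod p, u ≠ 0 →
      ∑ s : {s : ZMod p // s ≠ 0}, (kloosterman p (u * s) + p + 1) *
          (Nat.card {x : F | x ≠ 0 ∧ Algebra.trace (ZMod p) F x = 1 ∧
            Algebra.trace (ZMod p) F x⁻¹ = (s : ZMod p)} : ℂ) =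
        kloostermanExt p F u + (p : ℂ) ^ m + 1) ∧
    (∀ t : {s : ZMod p // s ≠ 0} → ℂ,
      (∀ u : ZMod p, u ≠ 0 →
        ∑ s : {s : ZMod p // s ≠ 0}, (kloosterman p (u * s) + p + 1) * t s =
          kloostermanExt p F u + (p : ℂ) ^ m + 1) →
      ∀ s : {s : ZMod p // s ≠ 0},
        t s = (Nat.card {x : F | x ≠ 0 ∧ Algebra.trace (ZMod p) F x = 1 ∧
          Algebra.trace (ZMod p) F x⁻¹ = (s : ZMod p)} : ℂ)) := by
  have hiff (t : {s : ZMod p // s ≠ 0} → ℂ) :=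
    kloosterman_linear_system_unique_general (F := F) (ZMod.isPrimitive_stdAddChar p) t
  simp only [← kloosterman_eq_kloostermanSum, ← kloostermanExt_eq_kloostermanSum, ZMod.card, hq,
    Nat.cast_pow] at hiff
  exact ⟨(hiff _).2 fun _ ↦ rfl, fun t ↦ (hiff t).1⟩
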